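/- arXiv:2510.09431 — 6 statements merged into one kernel-verified Lean document; each statement's English description precedes it below -/
import Mathlib

section
/- (Floating-point right-turn test is accurate for points far from the line.) Let p, u, q ∈ ℝ² with p ≠ q, let 0 < ε < 1/6, set γ₆ := 6ε/(1−6ε), and let M ≥ 0 bound the absolute value of every coordinate of p, u, and q. Suppose δ₁, …, δ₆ are real numbers with |δᵢ| ≤ ε for all i, and suppose the floating-point evaluation of the right-turn test disagrees with the exact test, i.e. either (a) orient(p,u,q) > 0 but (1+δ₁)(1+δ₂)(1+δ₃)·(p_x−u_x)(q_y−p_y) ≤ (1+δ₄)(1+δ₅)(1+δ₆)·(p_y−u_y)(q_x−p_x), or (b) orient(p,u,q) ≤ 0 but (1+δ₁)(1+δ₂)(1+δ₃)·(p_x−u_x)(q_y−p_y) > (1+δ₄)(1+δ₅)(1+δ₆)·(p_y−u_y)(q_x−p_x). Then the distance from u to the line through p and q satisfies d(u, L(p,q)) ≤ 2·γ₆·M. -/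
/-- The orientation of three points in the plane. -/
def orient (p u q : EuclideanSpace ℝ (Fin 2)) : ℝ :=
  (p 0 - u 0) * (q 1 - u 1) - (p 1 - u 1) * (q 0 - u 0)

/-!
The test compares `a = (p₀ - u₀) (q₁ - p₁)` with `b = (p₁ - u₁) (q₀ - p₀)`, and `a - b` is the
orientation, that is, up to sign, `|pq|` times the distance from `u` to the line `pq`. After
dividing by the rounding factors of `b`, the computed test compares `r a` with `b`, where `r` is a
product of six factors `(1 + δᵢ) ^ (±1)`, so `|r - 1| ≤ γ₆`. If the two tests disagree, then
`a - b` and `r a - b` have opposite signs, so `|a - b|` is at most their difference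
`|r - 1| |a| ≤ γ₆ |p₀ - u₀| |q₁ - p₁|`. Finally `|q₁ - p₁| ≤ |pq|`.
-/

lemma abs_sub_le_of_sub_mul_sub_nonpos {R : Type*} [CommRing R] [LinearOrder R]
    [IsStrictOrderedRing R] {x y z : R} (h : (x - y) * (z - y) ≤ 0) : |x - y| ≤ |x - z| := by
  apply sq_le_sq.mp
  nlinarith [sq_nonneg (z - y)]

section Rounding

variable {K ι : Type*} [Field K] [LinearOrder K] [IsStrictOrderedRing K]

lemma one_add_zpow_units_mem_Icc {ε δ : K} (hε : ε < 1) (hδ : |δ| ≤ ε) (ρ : ℤˣ) :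
    (1 + δ) ^ (ρ : ℤ) ∈ Set.Icc (1 - ε) (1 - ε)⁻¹ := by
  obtain ⟨hlower, hupper⟩ := abs_le.mp hδ
  have hε_pos : 0 < 1 - ε := by linarith
  have hδ_pos : 0 < 1 + δ := by linarith
  have hmul : (1 + δ) * (1 - ε) ≤ 1 := by nlinarith
  obtain rfl | rfl := Int.units_eq_one_or ρ
  · rw [Units.val_one, zpow_one]
    exact ⟨by linarith, by rwa [← one_div, le_div_iff₀ hε_pos]⟩
  · rw [Units.val_neg, Units.val_one, zpow_neg_one]
    exact ⟨by rwa [← one_div, le_div_iff₀' hδ_pos], inv_anti₀ hε_pos (by linarith)⟩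

lemma prod_one_add_zpow_units_mem_Icc {ε : K} (hε : ε < 1) (s : Finset ι) {δ : ι → K}
    (hδ : ∀ i ∈ s, |δ i| ≤ ε) (ρ : ι → ℤˣ) :
    ∏ i ∈ s, (1 + δ i) ^ (ρ i : ℤ) ∈ Set.Icc ((1 - ε) ^ s.card) ((1 - ε) ^ s.card)⁻¹ := by
  have hfactor : ∀ i ∈ s, (1 + δ i) ^ (ρ i : ℤ) ∈ Set.Icc (1 - ε) (1 - ε)⁻¹ :=
    fun i hi ↦ one_add_zpow_units_mem_Icc hε (hδ i hi) (ρ i)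
  have hε_pos : 0 < 1 - ε := sub_pos.mpr hε
  rw [← inv_pow, ← Finset.prod_const, ← Finset.prod_const]
  exact ⟨Finset.prod_le_prod (fun _ _ ↦ hε_pos.le) fun i hi ↦ (hfactor i hi).1,
    Finset.prod_le_prod (fun i hi ↦ hε_pos.le.trans (hfactor i hi).1)
      fun i hi ↦ (hfactor i hi).2⟩

lemma abs_prod_one_add_zpow_units_sub_one_le {ε : K} {s : Finset ι} {δ : ι → K}
    (hδ : ∀ i ∈ s, |δ i| ≤ ε) (hs : s.card * ε < 1) (ρ : ι → ℤˣ) :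
    |∏ i ∈ s, (1 + δ i) ^ (ρ i : ℤ) - 1| ≤ s.card * ε / (1 - s.card * ε) := by
  obtain rfl | ⟨i, hi⟩ := s.eq_empty_or_nonempty
  · simp
  have hε_nonneg : 0 ≤ ε := (abs_nonneg _).trans (hδ i hi)
  have hcard : (1 : K) ≤ s.card := mod_cast Finset.card_pos.mpr ⟨i, hi⟩
  have hε : ε < 1 := (le_mul_of_one_le_left hε_nonneg hcard).trans_lt hs
  have hpos : 0 < 1 - s.card * ε := sub_pos.mpr hs
  have bernoulli : 1 - s.card * ε ≤ (1 - ε) ^ s.card := by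
    simpa [sub_eq_add_neg] using one_add_mul_le_pow (a := -ε) (by linarith) s.card
  obtain ⟨hlower, hupper⟩ := prod_one_add_zpow_units_mem_Icc hε s hδ ρ
  have hinv : (1 - s.card * ε)⁻¹ = 1 + s.card * ε / (1 - s.card * ε) := by
    field_simp
    ring
  have hγ : s.card * ε ≤ s.card * ε / (1 - s.card * ε) :=
    le_div_self (by positivity) hpos (by linarith [show 0 ≤ s.card * ε by positivity])
  rw [abs_le]
  constructor <;> linarith [inv_anti₀ hpos bernoulli]

lemma abs_prod_three_div_prod_three_sub_one_le {ε : K} {δ : Fin 6 → K} (hδ : ∀ i, |δ i| ≤ ε)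
    (hε : 6 * ε < 1) :
    |(1 + δ 0) * (1 + δ 1) * (1 + δ 2) / ((1 + δ 3) * (1 + δ 4) * (1 + δ 5)) - 1| ≤
      6 * ε / (1 - 6 * ε) := by
  simpa [Fin.prod_univ_six, div_eq_mul_inv, mul_assoc, mul_comm, mul_left_comm] using
    abs_prod_one_add_zpow_units_sub_one_le (s := Finset.univ) (fun i _ ↦ hδ i) (by simpa)
      ![1, 1, 1, -1, -1, -1]

lemma abs_sub_le_of_scaled_comparison_disagrees {A B a b : K} (hB : 0 < B)
    (h : (0 < a - b ∧ A * a ≤ B * b) ∨ (a - b ≤ 0 ∧ B * b < A * a)) :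
    |a - b| ≤ |A / B - 1| * |a| := by
  have hscaled : A / B * a - b = (A * a - B * b) / B := by field_simp
  have hopposite : (a - b) * (A / B * a - b) ≤ 0 := by
    rw [hscaled]
    rcases h with ⟨hexact, hrounded⟩ | ⟨hexact, hrounded⟩
    · exact mul_nonpos_of_nonneg_of_nonpos hexact.le
        (div_nonpos_of_nonpos_of_nonneg (sub_nonpos.mpr hrounded) hB.le)
    · exact mul_nonpos_of_nonpos_of_nonneg hexact
        (div_nonneg (sub_nonneg.mpr hrounded.le) hB.le)
  calc |a - b| ≤ |a - A / B * a| := abs_sub_le_of_sub_mul_sub_nonpos hopposite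
    _ = |A / B - 1| * |a| := by rw [abs_sub_comm, ← sub_one_mul, abs_mul]

end Rounding

lemma orient_eq_mul_sub_mul (p u q : EuclideanSpace ℝ (Fin 2)) :
    orient p u q = (p 0 - u 0) * (q 1 - p 1) - (p 1 - u 1) * (q 0 - p 0) := by
  unfold orient
  ring

lemma inner_sq_add_cross_sq (v w : EuclideanSpace ℝ (Fin 2)) :
    inner ℝ v w ^ 2 + (v 0 * w 1 - v 1 * w 0) ^ 2 = (‖v‖ * ‖w‖) ^ 2 := by
  simp only [mul_pow, EuclideanSpace.real_norm_sq_eq, PiLp.inner_apply, Fin.sum_univ_two,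
    RCLike.inner_apply, conj_trivial]
  ring

lemma infDist_affineSpan_pair_mul_dist (p u q : EuclideanSpace ℝ (Fin 2)) :
    Metric.infDist u (affineSpan ℝ {p, q} : Set (EuclideanSpace ℝ (Fin 2))) * dist p q =
      |orient p u q| := by
  set f := EuclideanGeometry.orthogonalProjection (affineSpan ℝ {p, q}) u
  have hortho : inner ℝ (u - f : EuclideanSpace ℝ (Fin 2)) (q - p) = 0 :=
    Submodule.inner_left_of_mem_orthogonal
      (AffineSubspace.vsub_mem_direction (right_mem_affineSpan_pair ℝ p q)
        (left_mem_affineSpan_pair ℝ p q))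
      (EuclideanGeometry.vsub_orthogonalProjection_mem_direction_orthogonal _ u)
  obtain ⟨t, ht⟩ := mem_affineSpan_pair_iff_exists_lineMap_eq.mp f.2
  have hcross : orient p u q =
      -((u - f : EuclideanSpace ℝ (Fin 2)) 0 * (q - p) 1 - (u - f) 1 * (q - p) 0) := by
    simp only [orient, ← ht, AffineMap.lineMap_apply, vsub_eq_sub, vadd_eq_add, PiLp.add_apply,
      PiLp.smul_apply, PiLp.sub_apply, smul_eq_mul]
    ring
  have hsq := inner_sq_add_cross_sq (u - f) (q - p)
  rw [hortho, zero_pow two_ne_zero, zero_add, ← neg_sq, ← hcross, sq_eq_sq_iff_abs_eq_abs,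
    abs_of_nonneg (by positivity : 0 ≤ ‖u - f‖ * ‖q - p‖)] at hsq
  rw [← EuclideanGeometry.dist_orthogonalProjection_eq_infDist, dist_eq_norm, dist_comm p q,
    dist_eq_norm, hsq]

theorem right_turn_test_accurate_general
    (p u q : EuclideanSpace ℝ (Fin 2)) (hpq : p ≠ q) (ε : ℝ) (hε6 : ε < 1 / 6)
    (δ : Fin 6 → ℝ) (hδ : ∀ i, |δ i| ≤ ε)
    (hdisagree :
      (orient p u q > 0 ∧
        (1 + δ 0) * (1 + δ 1) * (1 + δ 2) * ((p 0 - u 0) * (q 1 - p 1)) ≤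
          (1 + δ 3) * (1 + δ 4) * (1 + δ 5) * ((p 1 - u 1) * (q 0 - p 0))) ∨
      (orient p u q ≤ 0 ∧
        (1 + δ 0) * (1 + δ 1) * (1 + δ 2) * ((p 0 - u 0) * (q 1 - p 1)) >
          (1 + δ 3) * (1 + δ 4) * (1 + δ 5) * ((p 1 - u 1) * (q 0 - p 0)))) :
    Metric.infDist u (affineSpan ℝ {p, q} : Set (EuclideanSpace ℝ (Fin 2)))
      ≤ 6 * ε / (1 - 6 * ε) * |p 0 - u 0| := by
  have hε : 0 ≤ ε := (abs_nonneg _).trans (hδ 0)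
  have hγ : 0 ≤ 6 * ε / (1 - 6 * ε) := div_nonneg (by linarith) (by linarith)
  have hδ_pos (i : Fin 6) : 0 < 1 + δ i := by linarith [neg_le_of_abs_le (hδ i)]
  have horient : |orient p u q| ≤ 6 * ε / (1 - 6 * ε) * |(p 0 - u 0) * (q 1 - p 1)| := by
    rw [orient_eq_mul_sub_mul] at hdisagree ⊢
    exact (abs_sub_le_of_scaled_comparison_disagrees
      (mul_pos (mul_pos (hδ_pos 3) (hδ_pos 4)) (hδ_pos 5)) hdisagree).trans
      (mul_le_mul_of_nonneg_right
        (abs_prod_three_div_prod_three_sub_one_le hδ (by linarith)) (abs_nonneg _))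
  have hcoord : |q 1 - p 1| ≤ dist p q := by
    rw [dist_comm, dist_eq_norm]
    exact PiLp.norm_apply_le (q - p) 1
  refine le_of_mul_le_mul_right ?_ (dist_pos.mpr hpq)
  calc Metric.infDist u (affineSpan ℝ {p, q}) * dist p q
      = |orient p u q| := infDist_affineSpan_pair_mul_dist p u q
    _ ≤ 6 * ε / (1 - 6 * ε) * |(p 0 - u 0) * (q 1 - p 1)| := horient
    _ ≤ 6 * ε / (1 - 6 * ε) * (|p 0 - u 0| * dist p q) := by
        rw [abs_mul]
        gcongr
    _ = 6 * ε / (1 - 6 * ε) * |p 0 - u 0| * dist p q := (mul_assoc _ _ _).symm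

/-- If the floating-point right-turn test disagrees with the exact right-turn test,
then `u` is within distance `2 * γ₆ * M` of the line through `p` and `q`. -/
theorem right_turn_test_accurate
    (p u q : EuclideanSpace ℝ (Fin 2)) (hpq : p ≠ q)
    (ε M : ℝ) (hε : 0 < ε) (hε6 : ε < 1 / 6) (hM : 0 ≤ M)
    (hpM : ∀ i, |p i| ≤ M) (huM : ∀ i, |u i| ≤ M) (hqM : ∀ i, |q i| ≤ M)
    (δ : Fin 6 → ℝ) (hδ : ∀ i, |δ i| ≤ ε)
    (hdisagree :
      (orient p u q > 0 ∧
        (1 + δ 0) * (1 + δ 1) * (1 + δ 2) * ((p 0 - u 0) * (q 1 - p 1)) ≤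
          (1 + δ 3) * (1 + δ 4) * (1 + δ 5) * ((p 1 - u 1) * (q 0 - p 0))) ∨
      (orient p u q ≤ 0 ∧
        (1 + δ 0) * (1 + δ 1) * (1 + δ 2) * ((p 0 - u 0) * (q 1 - p 1)) >
          (1 + δ 3) * (1 + δ 4) * (1 + δ 5) * ((p 1 - u 1) * (q 0 - p 0)))) :
    Metric.infDist u (affineSpan ℝ {p, q} : Set (EuclideanSpace ℝ (Fin 2)))
      ≤ 2 * (6 * ε / (1 - 6 * ε)) * M := by
  have hpu : |p 0 - u 0| ≤ 2 * M := by linarith [abs_sub (p 0) (u 0), hpM 0, huM 0]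
  have hγ : 0 ≤ 6 * ε / (1 - 6 * ε) := div_nonneg (by linarith) (by linarith)
  linarith [right_turn_test_accurate_general p u q hpq ε hε6 δ hδ hdisagree,
    mul_le_mul_of_nonneg_left hpu hγ]
end

section
/- (Floating-point distance comparison is accurate.) Let p, q, u, u' ∈ ℝ² with p ≠ q, let γ ≥ 0, and let M ≥ 0 bound the absolute value of every coordinate of p, q, u, and u'. If |(q_y−p_y)(u_x−u'_x) − (q_x−p_x)(u_y−u'_y)| ≤ γ·|(q_x−p_x)(u_y−u'_y)|, then the distances of u and u' to the line through p and q differ by at most 2γM: |d(u, L(p,q)) − d(u', L(p,q))| ≤ 2·γ·M. -/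
/-!
Let `ω` be the area form of the oriented plane. The parallelogram spanned by `q - p` and `u - p`
has base `‖q - p‖` and height the distance from `u` to the line through `p` and `q`, so that
distance is `|ω (q - p) (u - p)| / ‖q - p‖`. By linearity of `ω`, the distances of `u` and `u'`
differ by at most `|ω (q - p) (u - u')| / ‖q - p‖`. In coordinates the numerator is the quantity
which the test compares with `0`; its error bound `γ * |(q 0 - p 0) * (u 1 - u' 1)|` is at most
`γ * ‖q - p‖ * |u 1 - u' 1|`.
-/

section OrientedPlane

open Module EuclideanGeometry

variable {V P : Type*} [NormedAddCommGroup V] [InnerProductSpace ℝ V] [MetricSpace P]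
  [NormedAddTorsor V P] [Fact (finrank ℝ V = 2)] (o : Orientation ℝ V (Fin 2))

theorem norm_vsub_mul_infDist_line_eq_abs_areaForm (p q u : P) :
    ‖q -ᵥ p‖ * Metric.infDist u (line[ℝ, p, q] : Set P) =
      |o.areaForm (q -ᵥ p) (u -ᵥ p)| := by
  have hp : p ∈ line[ℝ, p, q] := left_mem_affineSpan_pair ℝ p q
  have hq : q ∈ line[ℝ, p, q] := right_mem_affineSpan_pair ℝ p q
  let foot : P := orthogonalProjection line[ℝ, p, q] u
  obtain ⟨t, ht⟩ : ∃ t : ℝ, t • (q -ᵥ p) = foot -ᵥ p :=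
    mem_vectorSpan_pair_rev.mp <| direction_affineSpan ℝ {p, q} ▸
      AffineSubspace.vsub_mem_direction (orthogonalProjection_mem u) hp
  have horth : inner ℝ (q -ᵥ p) (u -ᵥ foot) = 0 :=
    Submodule.inner_right_of_mem_orthogonal (AffineSubspace.vsub_mem_direction hq hp)
      (vsub_orthogonalProjection_mem_direction_orthogonal _ u)
  calc ‖q -ᵥ p‖ * Metric.infDist u (line[ℝ, p, q] : Set P)
      = ‖q -ᵥ p‖ * ‖u -ᵥ foot‖ := by
        rw [← dist_orthogonalProjection_eq_infDist, dist_eq_norm_vsub V]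
    _ = |o.areaForm (q -ᵥ p) (u -ᵥ foot)| := (o.abs_areaForm_of_orthogonal horth).symm
    _ = |o.areaForm (q -ᵥ p) (u -ᵥ p)| := by
        rw [← vsub_add_vsub_cancel u foot p, ← ht, map_add, map_smul, o.areaForm_apply_self,
          smul_zero, add_zero]

theorem norm_vsub_mul_abs_infDist_line_sub_le_abs_areaForm (p q u u' : P) :
    ‖q -ᵥ p‖ * |Metric.infDist u (line[ℝ, p, q] : Set P) -
        Metric.infDist u' (line[ℝ, p, q] : Set P)| ≤
      |o.areaForm (q -ᵥ p) (u -ᵥ u')| :=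
  calc ‖q -ᵥ p‖ * |Metric.infDist u (line[ℝ, p, q] : Set P) -
        Metric.infDist u' (line[ℝ, p, q] : Set P)|
      = |(|o.areaForm (q -ᵥ p) (u -ᵥ p)| - |o.areaForm (q -ᵥ p) (u' -ᵥ p)|)| := by
        rw [← norm_vsub_mul_infDist_line_eq_abs_areaForm,
          ← norm_vsub_mul_infDist_line_eq_abs_areaForm, ← mul_sub, abs_mul, abs_norm]
    _ ≤ |o.areaForm (q -ᵥ p) (u -ᵥ p) - o.areaForm (q -ᵥ p) (u' -ᵥ p)| :=
        abs_abs_sub_abs_le _ _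
    _ = |o.areaForm (q -ᵥ p) (u -ᵥ u')| := by
        rw [← map_sub, vsub_sub_vsub_cancel_right]

theorem abs_areaForm_eq_abs_repr (b : OrthonormalBasis (Fin 2) ℝ V) (v w : V) :
    |o.areaForm v w| = |b.repr v 0 * b.repr w 1 - b.repr v 1 * b.repr w 0| := by
  rw [o.areaForm_to_volumeForm, o.volumeForm_robust' b, Basis.det_apply, Matrix.det_fin_two]
  simp [Basis.toMatrix_apply, mul_comm]

end OrientedPlane

theorem farther_test_accurate_general
    (p q u u' : EuclideanSpace ℝ (Fin 2)) (hpq : p ≠ q) (γ : ℝ) (hγ : 0 ≤ γ)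
    (h : |(q 1 - p 1) * (u 0 - u' 0) - (q 0 - p 0) * (u 1 - u' 1)| ≤
      γ * |(q 0 - p 0) * (u 1 - u' 1)|) :
    |Metric.infDist u (affineSpan ℝ {p, q} : Set (EuclideanSpace ℝ (Fin 2))) -
      Metric.infDist u' (affineSpan ℝ {p, q} : Set (EuclideanSpace ℝ (Fin 2)))|
      ≤ γ * |u 1 - u' 1| := by
  have : Fact (Module.finrank ℝ (EuclideanSpace ℝ (Fin 2)) = 2) := ⟨finrank_euclideanSpace_fin⟩
  let e := EuclideanSpace.basisFun (Fin 2) ℝ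
  let o := e.toBasis.orientation
  have hx : |q 0 - p 0| ≤ ‖q - p‖ := PiLp.norm_apply_le (q - p) 0
  refine le_of_mul_le_mul_left ?_ (norm_sub_pos_iff.mpr hpq.symm)
  calc ‖q - p‖ * |Metric.infDist u line[ℝ, p, q] - Metric.infDist u' line[ℝ, p, q]|
      ≤ |o.areaForm (q - p) (u - u')| :=
        norm_vsub_mul_abs_infDist_line_sub_le_abs_areaForm o p q u u'
    _ = |(q 1 - p 1) * (u 0 - u' 0) - (q 0 - p 0) * (u 1 - u' 1)| :=
        (abs_areaForm_eq_abs_repr o e (q - p) (u - u')).trans (abs_sub_comm _ _)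
    _ ≤ γ * |(q 0 - p 0) * (u 1 - u' 1)| := h
    _ = |q 0 - p 0| * (γ * |u 1 - u' 1|) := by rw [abs_mul]; ring
    _ ≤ ‖q - p‖ * (γ * |u 1 - u' 1|) := by gcongr

/-- If the (perturbed) floating-point farther-from-line comparison disagrees with the
exact one, witnessed by the stated inequality, then the distances of `u` and `u'` to
the line through `p` and `q` differ by at most `2 * γ * M`. -/
theorem farther_test_accurate
    (p q u u' : EuclideanSpace ℝ (Fin 2)) (hpq : p ≠ q)
    (γ M : ℝ) (hγ : 0 ≤ γ) (hM : 0 ≤ M)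
    (hpM : ∀ i, |p i| ≤ M) (hqM : ∀ i, |q i| ≤ M)
    (huM : ∀ i, |u i| ≤ M) (hu'M : ∀ i, |u' i| ≤ M)
    (h : |(q 1 - p 1) * (u 0 - u' 0) - (q 0 - p 0) * (u 1 - u' 1)| ≤
      γ * |(q 0 - p 0) * (u 1 - u' 1)|) :
    |Metric.infDist u (affineSpan ℝ {p, q} : Set (EuclideanSpace ℝ (Fin 2))) -
      Metric.infDist u' (affineSpan ℝ {p, q} : Set (EuclideanSpace ℝ (Fin 2)))|
      ≤ 2 * γ * M := by
  have hu : |u 1 - u' 1| ≤ 2 * M := by linarith [abs_sub (u 1) (u' 1), huM 1, hu'M 1]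
  linarith [farther_test_accurate_general p q u u' hpq γ hγ h, mul_le_mul_of_nonneg_left hu hγ]
end

section
/- (Error propagation in the sequential farthest-point reduction.) Let α be a type, f : α → ℝ, E ≥ 0, and sel : α → α → α a binary selection function such that for all a, b : α, sel a b = a or sel a b = b, and f(sel a b) ≥ max(f a, f b) − E. Then for every a : α and every list l of elements of α, the left fold satisfies f(List.foldl sel a l) ≥ (max of f over the elements of a :: l) − (length of l)·E. -/
/-! The value of an element is charged one `E` when the fold reaches it and one more for each later
element. Splitting the list at the element turns this into an induction over the suffix alone. -/

section FoldlError

variable {α β M : Type*} [AddMonoid M] [Preorder M] [AddRightMono M]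
  {f : α → M} {g : β → M} {E : M} {op : α → β → α}

theorem le_foldl_add_length_nsmul (hleft : ∀ a b, f a ≤ f (op a b) + E) (a : α) (l : List β) :
    f a ≤ f (l.foldl op a) + l.length • E := by
  induction l generalizing a with
  | nil => simp
  | cons b l ih =>
    calc
      f a ≤ f (op a b) + E := hleft a b
      _ ≤ f (l.foldl op (op a b)) + l.length • E + E := by gcongr; exact ih (op a b)
      _ = f ((b :: l).foldl op a) + (b :: l).length • E := by
        rw [add_assoc, ← succ_nsmul, List.foldl_cons, List.length_cons]

theorem le_foldl_append_cons_add_nsmul (hleft : ∀ a b, f a ≤ f (op a b) + E)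
    (hright : ∀ a b, g b ≤ f (op a b) + E) (a : α) (l₁ : List β) (b : β) (l₂ : List β) :
    g b ≤ f ((l₁ ++ b :: l₂).foldl op a) + (l₂.length + 1) • E := by
  rw [List.foldl_append, List.foldl_cons, succ_nsmul, ← add_assoc]
  calc
    g b ≤ f (op (l₁.foldl op a) b) + E := hright _ b
    _ ≤ f (l₂.foldl op (op (l₁.foldl op a) b)) + l₂.length • E + E := by
      gcongr
      exact le_foldl_add_length_nsmul hleft _ l₂

end FoldlError

theorem foldl_sel_ge_max_sub_general {α M : Type*} [AddMonoid M] [SemilatticeSup M]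
    [AddLeftMono M] [AddRightMono M] {f : α → M} {E : M} (hE : 0 ≤ E) {sel : α → α → α}
    (hacc : ∀ a b, f a ⊔ f b ≤ f (sel a b) + E) {a x : α} {l : List α} (hx : x ∈ a :: l) :
    f x ≤ f (l.foldl sel a) + l.length • E := by
  have hleft (a b : α) : f a ≤ f (sel a b) + E := le_sup_left.trans (hacc a b)
  have hright (a b : α) : f b ≤ f (sel a b) + E := le_sup_right.trans (hacc a b)
  rcases List.mem_cons.1 hx with rfl | hxl
  · exact le_foldl_add_length_nsmul hleft x l
  · obtain ⟨l₁, l₂, rfl⟩ := List.append_of_mem hxl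
    have hlength : l₂.length + 1 ≤ (l₁ ++ x :: l₂).length := by simp
    calc
      f x ≤ f ((l₁ ++ x :: l₂).foldl sel a) + (l₂.length + 1) • E :=
        le_foldl_append_cons_add_nsmul hleft hright a l₁ x l₂
      _ ≤ f ((l₁ ++ x :: l₂).foldl sel a) + (l₁ ++ x :: l₂).length • E := by gcongr

/-- Error propagation in the sequential farthest-point reduction (Algorithm 1):
the left fold of a selection function that loses at most `E` per comparison
achieves the maximum of `f` up to `(length l) * E`. -/
theorem foldl_sel_ge_max_sub
    {α : Type*} (f : α → ℝ) (E : ℝ) (hE : 0 ≤ E)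
    (sel : α → α → α)
    (hsel : ∀ a b, sel a b = a ∨ sel a b = b)
    (hacc : ∀ a b, f (sel a b) ≥ max (f a) (f b) - E) :
    ∀ (a : α) (l : List α), ∀ x ∈ a :: l,
      f (List.foldl sel a l) ≥ f x - (l.length : ℝ) * E := by
  intro a l x hx
  rw [ge_iff_le, sub_le_iff_le_add, ← nsmul_eq_mul]
  exact foldl_sel_ge_max_sub_general hE (fun a b => sub_le_iff_le_add.1 (hacc a b)) hx
end

section
/- (Error propagation in the blocked farthest-point reduction.) Let α be a type, f : α → ℝ, E ≥ 0, and sel : α → α → α such that for all a, b : α, sel a b = a or sel a b = b, and f(sel a b) ≥ max(f a, f b) − E. Let L be a nonempty list of nonempty lists (blocks) of elements of α, each block of length at most m. Reduce each block by a left fold with sel, then reduce the list of block results by a left fold with sel. The final result r satisfies f(r) ≥ (max of f over all elements of all blocks) − ((m − 1) + (length of L − 1))·E. -/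
/-- Reduce a nonempty list by a left fold with `sel` (junk value on the empty list). -/
def reduce1 {α : Type*} [Inhabited α] (sel : α → α → α) : List α → α
  | [] => default
  | a :: t => t.foldl sel a

section ApproximateSelection

variable {α R : Type*} [AddMonoid R] [Preorder R] [AddLeftMono R] [AddRightMono R]
  {f : α → R} {E : R} {sel : α → α → α}

theorem le_foldl_add_nsmul (hE : 0 ≤ E)
    (herr : ∀ a b, f a ≤ f (sel a b) + E ∧ f b ≤ f (sel a b) + E)
    {a x : α} {t : List α} (hx : x ∈ a :: t) :
    f x ≤ f (t.foldl sel a) + t.length • E := by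
  induction t using List.reverseRecOn with
  | nil => simp [List.mem_singleton.1 hx]
  | append_singleton t b ih =>
    obtain ⟨hfold, hlast⟩ := herr (t.foldl sel a) b
    rw [List.foldl_concat, List.length_append, List.length_singleton, succ_nsmul', ← add_assoc]
    rw [← List.cons_append, List.mem_append, List.mem_singleton] at hx
    rcases hx with hx | rfl
    · calc
        f x ≤ f (t.foldl sel a) + t.length • E := ih hx
        _ ≤ f (sel (t.foldl sel a) b) + E + t.length • E := by gcongr
    · exact hlast.trans (le_add_of_nonneg_right (nsmul_nonneg hE t.length))

variable [Inhabited α]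

theorem le_reduce1_add_nsmul (hE : 0 ≤ E)
    (herr : ∀ a b, f a ≤ f (sel a b) + E ∧ f b ≤ f (sel a b) + E)
    {l : List α} {x : α} (hx : x ∈ l) :
    f x ≤ f (reduce1 sel l) + (l.length - 1) • E := by
  cases l with
  | nil => exact absurd hx List.not_mem_nil
  | cons a t => exact le_foldl_add_nsmul hE herr hx

-- The subtractions do not truncate: `hx` and `hlength` give `1 ≤ m`, `hB` gives `1 ≤ L.length`.
theorem blocked_reduce_ge_max_sub_general (hE : 0 ≤ E)
    (herr : ∀ a b, f a ≤ f (sel a b) + E ∧ f b ≤ f (sel a b) + E)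
    {m : ℕ} {L : List (List α)} (hlength : ∀ B ∈ L, B.length ≤ m)
    {B : List α} (hB : B ∈ L) {x : α} (hx : x ∈ B) :
    f x ≤ f (reduce1 sel (L.map (reduce1 sel))) + ((m - 1) + (L.length - 1)) • E := by
  have hblock : f x ≤ f (reduce1 sel B) + (B.length - 1) • E := le_reduce1_add_nsmul hE herr hx
  have houter : f (reduce1 sel B) ≤
      f (reduce1 sel (L.map (reduce1 sel))) + (L.length - 1) • E := by
    simpa only [List.length_map] using
      le_reduce1_add_nsmul hE herr (List.mem_map_of_mem (f := reduce1 sel) hB)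
  calc
    f x ≤ f (reduce1 sel B) + (B.length - 1) • E := hblock
    _ ≤ f (reduce1 sel (L.map (reduce1 sel))) + (L.length - 1) • E + (m - 1) • E := by
      gcongr
      exact hlength B hB
    _ = f (reduce1 sel (L.map (reduce1 sel))) + ((m - 1) + (L.length - 1)) • E := by
      rw [add_assoc, ← add_nsmul, add_comm (L.length - 1)]

end ApproximateSelection

/-- Error propagation in the blocked farthest-point reduction (Algorithm 2):
reducing each block (of length at most `m`) by a left fold and then reducing the
block results achieves the maximum of `f` up to `((m - 1) + (|L| - 1)) * E`. -/
theorem blocked_reduce_ge_max_sub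
    {α : Type*} [Inhabited α] (f : α → ℝ) (E : ℝ) (hE : 0 ≤ E)
    (sel : α → α → α)
    (hsel : ∀ a b, sel a b = a ∨ sel a b = b)
    (hacc : ∀ a b, f (sel a b) ≥ max (f a) (f b) - E)
    (m : ℕ) (L : List (List α)) (hL : L ≠ [])
    (hblocks : ∀ B ∈ L, B ≠ [] ∧ B.length ≤ m) :
    ∀ B ∈ L, ∀ x ∈ B,
      f (reduce1 sel (L.map (reduce1 sel))) ≥
        f x - (((m : ℝ) - 1) + ((L.length : ℝ) - 1)) * E := by
  intro B hB x hx
  have hm : 0 < m := (List.length_pos_of_mem hx).trans_le (hblocks B hB).2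
  simpa [Nat.cast_pred hm, Nat.cast_pred (List.length_pos_of_mem hB)] using
    blocked_reduce_ge_max_sub_general hE
      (fun a b ↦ max_le_iff.1 (sub_le_iff_le_add.1 (hacc a b))) (fun B hB ↦ (hblocks B hB).2) hB hx
end

section
/- (Error propagation in the pairwise/recursive farthest-point reduction.) Let α be a type, f : α → ℝ, E ≥ 0, and sel : α → α → α such that for all a, b : α, sel a b = a or sel a b = b, and f(sel a b) ≥ max(f a, f b) − E. Define the pairwise reduction of a nonempty list recursively: the reduction of a one-element list is its element, and the reduction of a list l with |l| ≥ 2 is sel applied to the pairwise reductions of the first ⌈|l|/2⌉ elements and the remaining elements. Then for every nonempty list l of length n, f(pairwiseReduce sel l) ≥ (max of f over the elements of l) − ⌈log₂ n⌉·E. -/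
/-- Pairwise (recursive halving) reduction of a list by a binary operation `sel`:
a one-element list reduces to its element, and a longer list is split into its
first `⌈n/2⌉` elements and the rest, each reduced recursively, the results being
combined with `sel`. (Junk value on the empty list.) -/
def pairwiseReduce {α : Type*} [Inhabited α] (sel : α → α → α) (l : List α) : α :=
  if _h : l.length ≤ 1 then l.headI
  else
    sel (pairwiseReduce sel (l.take ((l.length + 1) / 2)))
        (pairwiseReduce sel (l.drop ((l.length + 1) / 2)))
  termination_by l.length
  decreasing_by
  · simp only [List.length_take]; omega
  · simp only [List.length_drop]; omega

/-!
An element of a list of length `n` takes part in at most `⌈log₂ n⌉` comparisons, since both halves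
have length at most `⌈n/2⌉` and `⌈log₂ n⌉ = ⌈log₂ ⌈n/2⌉⌉ + 1`. Each of these comparisons
loses at most `E`.
-/

section Reduction

variable {α : Type*} [Inhabited α] (sel : α → α → α)

theorem pairwiseReduce_singleton (a : α) : pairwiseReduce sel [a] = a := by
  rw [pairwiseReduce, dif_pos List.length_singleton.le, List.headI_cons]

theorem pairwiseReduce_of_one_lt_length {l : List α} (hl : 1 < l.length) :
    pairwiseReduce sel l =
      sel (pairwiseReduce sel (l.take ((l.length + 1) / 2)))
        (pairwiseReduce sel (l.drop ((l.length + 1) / 2))) := by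
  rw [pairwiseReduce, dif_neg hl.not_ge]

end Reduction

theorem clog_add_one_le_clog_of_le_ceil_div {b m n : ℕ} (hb : 1 < b) (hn : 1 < n)
    (hm : m ≤ (n + b - 1) / b) : Nat.clog b m + 1 ≤ Nat.clog b n := by
  rw [Nat.clog_of_one_lt hb hn]
  gcongr

theorem le_add_clog_nsmul_of_le_add {M : Type*} [AddMonoid M] [Preorder M] [AddLeftMono M]
    [AddRightMono M] {E u v w : M} {b m n : ℕ} (hE : 0 ≤ E) (hb : 1 < b) (hn : 1 < n)
    (hm : m ≤ (n + b - 1) / b) (huv : u ≤ v + Nat.clog b m • E) (hvw : v ≤ w + E) :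
    u ≤ w + Nat.clog b n • E :=
  calc
    u ≤ v + Nat.clog b m • E := huv
    _ ≤ w + E + Nat.clog b m • E := by gcongr
    _ = w + (Nat.clog b m + 1) • E := by rw [add_assoc, succ_nsmul']
    _ ≤ w + Nat.clog b n • E := by
      gcongr
      exact clog_add_one_le_clog_of_le_ceil_div hb hn hm

theorem pairwiseReduce_ge_max_sub_general {α M : Type*} [Inhabited α] [AddMonoid M] [Preorder M]
    [AddLeftMono M] [AddRightMono M] {f : α → M} {E : M} {sel : α → α → α} (hE : 0 ≤ E)
    (hacc : ∀ a b, f a ≤ f (sel a b) + E ∧ f b ≤ f (sel a b) + E)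
    {l : List α} {x : α} (hx : x ∈ l) :
    f x ≤ f (pairwiseReduce sel l) + Nat.clog 2 l.length • E := by
  induction l using pairwiseReduce.induct with
  | case1 l hl =>
    obtain ⟨a, rfl⟩ : ∃ a, l = [a] :=
      List.length_eq_one_iff.mp (hl.antisymm (List.length_pos_of_mem hx))
    obtain rfl : x = a := List.mem_singleton.mp hx
    simp [pairwiseReduce_singleton]
  | case2 l hl ih_take ih_drop =>
    have hl : 1 < l.length := not_le.mp hl
    rw [pairwiseReduce_of_one_lt_length sel hl]
    rw [← List.take_append_drop ((l.length + 1) / 2) l, List.mem_append] at hx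
    rcases hx with hx | hx
    · have hlen : (l.take ((l.length + 1) / 2)).length ≤ (l.length + 1) / 2 :=
        List.length_take_le _ _
      exact le_add_clog_nsmul_of_le_add hE one_lt_two hl hlen (ih_take hx) (hacc _ _).1
    · have hlen : (l.drop ((l.length + 1) / 2)).length ≤ (l.length + 1) / 2 := by
        rw [List.length_drop]
        omega
      exact le_add_clog_nsmul_of_le_add hE one_lt_two hl hlen (ih_drop hx) (hacc _ _).2

/-- Error propagation in the pairwise/recursive farthest-point reduction
(Algorithm 3): the pairwise reduction by a selection function losing at most `E`
per comparison achieves the maximum of `f` up to `⌈log₂ n⌉ * E`. -/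
theorem pairwiseReduce_ge_max_sub
    {α : Type*} [Inhabited α] (f : α → ℝ) (E : ℝ) (hE : 0 ≤ E)
    (sel : α → α → α)
    (hsel : ∀ a b, sel a b = a ∨ sel a b = b)
    (hacc : ∀ a b, f (sel a b) ≥ max (f a) (f b) - E)
    (l : List α) (hl : l ≠ []) :
    ∀ x ∈ l, f (pairwiseReduce sel l) ≥ f x - (Nat.clog 2 l.length : ℝ) * E := by
  simpa only [ge_iff_le, sub_le_iff_le_add, nsmul_eq_mul] using fun x hx ↦
    pairwiseReduce_ge_max_sub_general hE
      (fun a b ↦ max_le_iff.mp (sub_le_iff_le_add.mp (hacc a b))) hx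
end

section
/- (Quickhull's first geometric observation.) Let P be a finite subset of ℝ², let p, q ∈ P with p ≠ q, and let r ∈ P be a strict maximizer of the distance to the line through p and q, i.e. for every u ∈ P with u ≠ r one has d(u, L(p,q)) < d(r, L(p,q)). Then r is an extreme point of the convex hull of P (a vertex of the hull). -/
/-!
The points at distance less than `d(r, L)` from the line `L` form an open neighbourhood of fixed
radius of a convex set, hence a convex set. It contains `P \ {r}` but not `r`, so `r` is not in the
convex hull `C` of `P \ {r}`. Such an `r` is extreme: a segment of the hull of `P` with `r` between
two other points extends at both ends to points of `C`, which would put `r` in `C`.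
-/

section ExtremePoints

variable {𝕜 E : Type*} [Field 𝕜] [LinearOrder 𝕜] [IsStrictOrderedRing 𝕜]
  [AddCommGroup E] [Module 𝕜 E] {s : Set E} {x y : E}

theorem exists_wbtw_of_mem_convexHull_of_ne (hy : y ∈ convexHull 𝕜 s) (hyx : y ≠ x) :
    ∃ u ∈ convexHull 𝕜 (s \ {x}), Wbtw 𝕜 x y u := by
  rcases (s \ {x}).eq_empty_or_nonempty with hs | hs
  · have hs' : s ⊆ {x} := Set.sdiff_eq_empty.mp hs
    exact absurd (convexHull_min hs' (convex_singleton x) hy) hyx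
  · have hy' : y ∈ convexHull 𝕜 (insert x (s \ {x})) := by
      rw [Set.insert_sdiff_singleton]
      exact convexHull_mono (Set.subset_insert x s) hy
    rw [convexHull_insert hs] at hy'
    simpa only [convexJoin_singleton_left, Set.mem_iUnion₂, mem_segment_iff_wbtw, exists_prop]
      using hy'

theorem mem_extremePoints_convexHull_iff_notMem_convexHull_sdiff :
    x ∈ (convexHull 𝕜 s).extremePoints 𝕜 ↔ x ∈ s ∧ x ∉ convexHull 𝕜 (s \ {x}) := by
  refine ⟨fun hx ↦ ⟨extremePoints_convexHull_subset hx, fun hx' ↦ ?_⟩, fun ⟨hxs, hx⟩ ↦ ?_⟩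
  · rw [(convex_convexHull 𝕜 s).mem_extremePoints_iff_mem_sdiff_convexHull_sdiff] at hx
    exact hx.2 (convexHull_mono (Set.sdiff_subset_sdiff_left (subset_convexHull 𝕜 s)) hx')
  · refine mem_extremePoints_iff_forall_segment.mpr
      ⟨subset_convexHull 𝕜 s hxs, fun y hy z hz hyz ↦ ?_⟩
    by_contra! ⟨hyx, hzx⟩
    obtain ⟨u, hu, hxyu⟩ := exists_wbtw_of_mem_convexHull_of_ne hy hyx
    obtain ⟨v, hv, hxzv⟩ := exists_wbtw_of_mem_convexHull_of_ne hz hzx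
    have hyxv : Wbtw 𝕜 y x v := (mem_segment_iff_wbtw.mp hyz).trans_expand_left hxzv hzx.symm
    have huxv : Wbtw 𝕜 u x v := hxyu.symm.trans_expand_right hyxv hyx
    exact hx ((convex_convexHull 𝕜 _).segment_subset hu hv (mem_segment_iff_wbtw.mpr huxv))

end ExtremePoints

theorem farthest_point_extreme_general {E : Type*} [SeminormedAddCommGroup E] [NormedSpace ℝ E]
    {P K : Set E} {r : E} (hK : Convex ℝ K) (hK_ne : K.Nonempty) (hr : r ∈ P)
    (hmax : ∀ u ∈ P, u ≠ r → Metric.infDist u K < Metric.infDist r K) :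
    r ∈ (convexHull ℝ P).extremePoints ℝ := by
  have hP : P \ {r} ⊆ Metric.thickening (Metric.infDist r K) K := fun u hu ↦
    (Metric.mem_thickening_iff_infDist_lt hK_ne).mpr (hmax u hu.1 hu.2)
  rw [mem_extremePoints_convexHull_iff_notMem_convexHull_sdiff]
  refine ⟨hr, fun hr' ↦ ?_⟩
  have hrK : r ∈ Metric.thickening (Metric.infDist r K) K :=
    convexHull_min hP (hK.thickening _) hr'
  exact lt_irrefl _ ((Metric.mem_thickening_iff_infDist_lt hK_ne).mp hrK)

/-- Quickhull's first geometric observation: a strict maximizer of the distance to the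
line through two points of `P` is an extreme point (a vertex) of the convex hull of `P`. -/
theorem farthest_point_extreme
    (P : Finset (EuclideanSpace ℝ (Fin 2)))
    (p q r : EuclideanSpace ℝ (Fin 2))
    (hp : p ∈ P) (hq : q ∈ P) (hr : r ∈ P) (hpq : p ≠ q)
    (hmax : ∀ u ∈ P, u ≠ r →
      Metric.infDist u (affineSpan ℝ {p, q} : Set (EuclideanSpace ℝ (Fin 2))) <
        Metric.infDist r (affineSpan ℝ {p, q} : Set (EuclideanSpace ℝ (Fin 2)))) :
    r ∈ Set.extremePoints ℝ
      (convexHull ℝ (P : Set (EuclideanSpace ℝ (Fin 2)))) :=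
  farthest_point_extreme_general (affineSpan ℝ {p, q}).convex
    ⟨p, left_mem_affineSpan_pair ℝ p q⟩ hr hmax
end
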